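/- Let q be a power of an odd prime, let φ, C_{a,α} (a ∈ 𝔽_q ∪ {y}) be as in the context, let V be the (2q+3)×(2q+3) cyclic shift permutation matrix, and let ψ : 𝔽_q ∪ {y} → {1, 2, …, q+1} be any bijection. For α ∈ 𝔽_q define the (2q+3)q² × (2q+3)q² matrix N_α = Σ_{a ∈ 𝔽_q ∪ {y}} (V^{ψ(a)} + V^{−ψ(a)}) ⊗ C_{a,α}. Then for all α, β ∈ 𝔽_q: N_α·N_β = 2q²·(I_{2q+3} ⊗ I_q ⊗ φ(α+β)) + 2q·(I_{2q+3} ⊗ (φ(α+β) − I_q) ⊗ J_q) + 2q·J_{(2q+3)q²} + q·Σ_{a ∈ 𝔽_q ∪ {y}} (V^{2ψ(a)} + V^{−2ψ(a)}) ⊗ C_{a,α+β}. -/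

import Mathlib

open Matrix Kronecker

/-- The all-ones square matrix over ℤ. -/
def allOnes (ι : Type*) : Matrix ι ι ℤ := Matrix.of fun _ _ => 1

/-- The regular permutation representation of the additive group of `F`:
`phiMat F x` has (u,v)-entry 1 iff u = v + x. -/
def phiMat (F : Type*) [AddGroup F] [DecidableEq F] (x : F) : Matrix F F ℤ :=
  Matrix.of fun u v => if u = v + x then 1 else 0

/-- The auxiliary matrix C_{α,α'}: the q²×q² block matrix whose (β,β')-block is
φ(α(β'−β) + α'). -/
def Cmat (F : Type*) [Field F] [DecidableEq F] (α α' : F) :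
    Matrix (F × F) (F × F) ℤ :=
  Matrix.of fun p p' => phiMat F (α * (p'.1 - p.1) + α') p.2 p'.2

/-- The auxiliary matrix C_{y,α} = φ(α) ⊗ J_q. -/
def CyMat (F : Type*) [Field F] [Fintype F] [DecidableEq F] (α : F) :
    Matrix (F × F) (F × F) ℤ :=
  phiMat F α ⊗ₖ allOnes F

/-- The family C_{a,α} for a ∈ 𝔽_q ∪ {y}, where `none` plays the role of y. -/
def Cext (F : Type*) [Field F] [Fintype F] [DecidableEq F] :
    Option F → F → Matrix (F × F) (F × F) ℤ
  | some γ, α => Cmat F γ α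
  | none, α => CyMat F α

/-- The m×m cyclic shift permutation matrix: (i,j)-entry 1 iff j ≡ i+1 (mod m). -/
def shiftV (m : ℕ) : Matrix (Fin m) (Fin m) ℤ :=
  Matrix.of fun i j => if (j : ℕ) = ((i : ℕ) + 1) % m then 1 else 0

/-- N_α = Σ_{a ∈ 𝔽_q ∪ {y}} (V^{ψ(a)} + V^{−ψ(a)}) ⊗ C_{a,α}. -/
def Nmat (F : Type*) [Field F] [Fintype F] [DecidableEq F]
    (ψ : Option F → ℕ) (α : F) :
    Matrix (Fin (2 * Fintype.card F + 3) × (F × F))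
      (Fin (2 * Fintype.card F + 3) × (F × F)) ℤ :=
  ∑ a : Option F,
    (shiftV (2 * Fintype.card F + 3) ^ ψ a +
      (shiftV (2 * Fintype.card F + 3))ᵀ ^ ψ a) ⊗ₖ Cext F a α

/-!
The transpose of the cyclic shift is `φ(1)` in the regular representation of `ℤ/(2q+3)`, so
`V ^ k + V ^ (-k) = φ(k) + φ(-k)`. Write `W_a = φ(s_a) + φ(-s_a)`, where `s_a` and `-s_a` run
through all nonzero residues. Since `C_{a,α} C_{a,β} = q C_{a,α+β}` and `C_{a,α} C_{b,β} = J` for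
`a ≠ b`, `N_α N_β = q ∑ W_a² ⊗ C_{a,α+β} + ((∑ W_a)² - ∑ W_a²) ⊗ J`. Here `∑ W_a = J - I`, and
`W_a² = φ(2s_a) + φ(-2s_a) + 2I` where the `± 2s_a` again run through all nonzero residues because
the group has odd order. Hence the factor multiplying `⊗ J` is `2q (J - I)`, and its summand
`-2q I ⊗ J` cancels the all-ones term of `∑ C_{a,α+β}`, which enters through `2I` in `W_a²`.
-/

section Kronecker

variable {R ι l m n p : Type*}

theorem sum_kronecker [NonUnitalNonAssocSemiring R] (s : Finset ι) (A : ι → Matrix l m R)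
    (B : Matrix n p R) : (∑ a ∈ s, A a) ⊗ₖ B = ∑ a ∈ s, A a ⊗ₖ B := by
  ext
  simp only [kroneckerMap_apply, Matrix.sum_apply, Finset.sum_mul]

theorem kronecker_sum [NonUnitalNonAssocSemiring R] (s : Finset ι) (A : Matrix l m R)
    (B : ι → Matrix n p R) : A ⊗ₖ (∑ a ∈ s, B a) = ∑ a ∈ s, A ⊗ₖ B a := by
  ext
  simp only [kroneckerMap_apply, Matrix.sum_apply, Finset.mul_sum]

theorem sub_kronecker [NonUnitalNonAssocRing R] (A B : Matrix l m R) (C : Matrix n p R) :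
    (A - B) ⊗ₖ C = A ⊗ₖ C - B ⊗ₖ C := by
  ext
  simp only [kroneckerMap_apply, Matrix.sub_apply, sub_mul]

theorem sum_kronecker_mul_sum_kronecker [CommRing R] [Fintype ι] [Fintype m] [Fintype n]
    (W X : ι → Matrix m m R) (A B : ι → Matrix n n R) (J : Matrix n n R)
    (hAB : ∀ a b, a ≠ b → A a * B b = J) :
    (∑ a, W a ⊗ₖ A a) * (∑ a, X a ⊗ₖ B a) =
      ∑ a, (W a * X a) ⊗ₖ (A a * B a) +
        ((∑ a, W a) * (∑ a, X a) - ∑ a, W a * X a) ⊗ₖ J := by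
  classical
  have row_sum (a : ι) : ∑ b, (W a ⊗ₖ A a) * (X b ⊗ₖ B b) =
      (W a * X a) ⊗ₖ (A a * B a) + (W a * ∑ b, X b - W a * X a) ⊗ₖ J := by
    rw [Finset.mul_sum, ← Finset.sum_erase_eq_sub (Finset.mem_univ a), sum_kronecker,
      ← Finset.add_sum_erase _ _ (Finset.mem_univ a), ← mul_kronecker_mul]
    congr 1
    refine Finset.sum_congr rfl fun b hb ↦ ?_
    rw [← mul_kronecker_mul, hAB a b (Finset.ne_of_mem_erase hb).symm]
  rw [Finset.sum_mul_sum, Finset.sum_congr rfl fun a _ ↦ row_sum a, Finset.sum_add_distrib,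
    ← sum_kronecker, Finset.sum_sub_distrib, ← Finset.sum_mul]

end Kronecker

theorem allOnes_mul_allOnes (ι : Type*) [Fintype ι] :
    allOnes ι * allOnes ι = (Fintype.card ι : ℤ) • allOnes ι := by
  ext
  simp [Matrix.mul_apply, allOnes]

theorem allOnes_kronecker_allOnes (ι κ : Type*) : allOnes ι ⊗ₖ allOnes κ = allOnes (ι × κ) := by
  ext
  simp [allOnes]

section RegularRepresentation

variable {G : Type*} [AddGroup G] [DecidableEq G]

theorem phiMat_zero : phiMat G 0 = 1 := by
  ext
  simp [phiMat, Matrix.one_apply]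

theorem phiMat_transpose (x : G) : (phiMat G x)ᵀ = phiMat G (-x) := by
  ext u v
  simp only [phiMat, transpose_apply, of_apply, eq_add_neg_iff_add_eq, eq_comm]

variable [Fintype G]

theorem phiMat_mul_phiMat (x y : G) : phiMat G x * phiMat G y = phiMat G (y + x) := by
  ext
  simp [phiMat, Matrix.mul_apply, add_assoc]

theorem phiMat_pow (x : G) (k : ℕ) : phiMat G x ^ k = phiMat G (k • x) := by
  induction k with
  | zero => rw [pow_zero, zero_nsmul, phiMat_zero]
  | succ k ih => rw [pow_succ, ih, phiMat_mul_phiMat, succ_nsmul']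

theorem sum_phiMat : ∑ x : G, phiMat G x = allOnes G := by
  ext u v
  simp [phiMat, allOnes, Matrix.sum_apply, ← neg_add_eq_iff_eq_add]

theorem sum_phiMat_row (x u : G) : ∑ v, phiMat G x u v = 1 := by
  simp [phiMat, ← sub_eq_iff_eq_add]

theorem sum_phiMat_col (x v : G) : ∑ u, phiMat G x u v = 1 := by
  simp [phiMat]

/-- The symmetric matrix `φ(x) + φ(-x)`. For `x = k` in `ℤ/m` it is `V ^ k + V ^ (-k)`. -/
def symPhiMat (G : Type*) [AddGroup G] [DecidableEq G] (x : G) : Matrix G G ℤ :=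
  phiMat G x + phiMat G (-x)

theorem symPhiMat_mul_self (x : G) :
    symPhiMat G x * symPhiMat G x = symPhiMat G (2 • x) + (2 : ℤ) • 1 := by
  simp only [symPhiMat, add_mul, mul_add, phiMat_mul_phiMat, neg_add_cancel, add_neg_cancel,
    phiMat_zero, two_nsmul, neg_add_rev]
  module

end RegularRepresentation

section HalfSystem

variable {G ι : Type*} [AddGroup G] {s : ι → G}

/-- A half-system of `G`: a family `s` such that every element of `G` is exactly one of `0`,
`s a`, `-s a`, for exactly one index `a`. It expresses that the exponents `± ψ a` exhaust the
nonzero residues once each. The index `none` stands for `0`, and the two summands of `ι ⊕ ι` for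
the two signs. -/
def IsHalfSystem (s : ι → G) : Prop :=
  Function.Bijective fun o : Option (ι ⊕ ι) ↦ o.elim 0 (Sum.elim s fun a ↦ -s a)

theorem isHalfSystem_nsmul [Fintype G] [Fintype ι] {g : G} (hg : addOrderOf g = Fintype.card G)
    (hcard : Fintype.card G = 2 * Fintype.card ι + 1) {ψ : ι → ℕ}
    (hmem : ∀ a, ψ a ∈ Finset.Icc 1 (Fintype.card ι)) (hinj : Function.Injective ψ) :
    IsHalfSystem fun a ↦ ψ a • g := by
  simp only [Finset.mem_Icc] at hmem
  have ne_zero {k : ℕ} (hpos : 0 < k) (hlt : k < Fintype.card G) : k • g ≠ 0 := fun h ↦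
    hlt.not_ge (hg ▸ Nat.le_of_dvd hpos (addOrderOf_dvd_of_nsmul_eq_zero h))
  have s_ne_zero (a : ι) : ψ a • g ≠ 0 := ne_zero (hmem a).1 (by have := hmem a; omega)
  have s_injective : Function.Injective fun a ↦ ψ a • g := fun a b h ↦
    hinj <| (nsmul_eq_nsmul_iff_modEq.mp h).eq_of_lt_of_lt
      (by have := hmem a; omega) (by have := hmem b; omega)
  have s_ne_neg (a b : ι) : ψ a • g ≠ -(ψ b • g) := by
    rw [Ne, ← add_eq_zero_iff_eq_neg, ← add_nsmul]
    have := hmem a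
    have := hmem b
    exact ne_zero (by omega) (by omega)
  refine (Fintype.bijective_iff_injective_and_card _).mpr ⟨?_, ?_⟩
  · refine Option.injective_iff.mpr
      ⟨s_injective.sumElim (neg_injective.comp s_injective) s_ne_neg, ?_⟩
    rintro ⟨a | a, h⟩
    · exact s_ne_zero a h
    · exact s_ne_zero a (neg_eq_zero.mp h)
  · rw [Fintype.card_option, Fintype.card_sum, hcard, two_mul]

namespace IsHalfSystem

theorem card_eq [Fintype G] [Fintype ι] (hs : IsHalfSystem s) :
    Fintype.card G = 2 * Fintype.card ι + 1 := by
  rw [← Fintype.card_of_bijective hs, Fintype.card_option, Fintype.card_sum, two_mul]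

theorem two_nsmul [Finite ι] (hs : IsHalfSystem s) : IsHalfSystem fun a ↦ 2 • s a := by
  cases nonempty_fintype ι
  let _ : Fintype G := Fintype.ofBijective _ hs
  have coprime : (Nat.card G).Coprime 2 := by
    rw [Nat.card_eq_fintype_card, hs.card_eq, Nat.coprime_two_right]
    exact odd_two_mul_add_one _
  have doubled : (fun o : Option (ι ⊕ ι) ↦
        o.elim 0 (Sum.elim (fun a ↦ 2 • s a) fun a ↦ -(2 • s a))) =
      nsmulCoprime coprime ∘ fun o ↦ o.elim 0 (Sum.elim s fun a ↦ -s a) := by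
    ext (_ | a | a) <;> simp [neg_nsmul]
  rw [IsHalfSystem, doubled]
  exact (nsmulCoprime coprime).bijective.comp hs

theorem sum_eq [Fintype G] [Fintype ι] {M : Type*} [AddCommMonoid M] (hs : IsHalfSystem s)
    (f : G → M) :
    ∑ x, f x = f 0 + ∑ a, (f (s a) + f (-s a)) := by
  rw [← hs.sum_comp, Fintype.sum_option, Fintype.sum_sum_type, Finset.sum_add_distrib]
  rfl

variable [DecidableEq G] [Fintype ι]

theorem sum_symPhiMat (hs : IsHalfSystem s) : ∑ a, symPhiMat G (s a) = allOnes G - 1 := by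
  let _ : Fintype G := Fintype.ofBijective _ hs
  rw [← sum_phiMat, hs.sum_eq (phiMat G), phiMat_zero, add_sub_cancel_left]
  rfl

theorem sum_symPhiMat_mul_self_sub_sum_mul_self [Fintype G] (hs : IsHalfSystem s) :
    (∑ a, symPhiMat G (s a)) * (∑ a, symPhiMat G (s a)) -
        ∑ a, symPhiMat G (s a) * symPhiMat G (s a) =
      (2 * (Fintype.card ι - 1) : ℤ) • (allOnes G - 1) := by
  have sum_sq : ∑ a, symPhiMat G (s a) * symPhiMat G (s a) =
      allOnes G - 1 + (2 * Fintype.card ι : ℤ) • 1 := by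
    simp only [symPhiMat_mul_self, Finset.sum_add_distrib, hs.two_nsmul.sum_symPhiMat,
      Finset.sum_const, Finset.card_univ]
    module
  have sq_sum : (allOnes G - 1) * (allOnes G - 1) =
      (2 * Fintype.card ι - 1 : ℤ) • allOnes G + 1 := by
    rw [sub_mul, mul_sub, allOnes_mul_allOnes, hs.card_eq, mul_one, one_mul]
    push_cast
    module
  rw [hs.sum_symPhiMat, sq_sum, sum_sq]
  module

end IsHalfSystem

end HalfSystem

section Shift

variable {m : ℕ} [NeZero m]

theorem shiftV_transpose : (shiftV m)ᵀ = phiMat (Fin m) 1 := by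
  ext i j
  simp [shiftV, phiMat, Fin.ext_iff, Fin.val_add]

theorem shiftV_pow_add_transpose_pow (k : ℕ) :
    shiftV m ^ k + (shiftV m)ᵀ ^ k = symPhiMat (Fin m) (k • 1) := by
  rw [← transpose_transpose (shiftV m), shiftV_transpose, transpose_transpose, ← transpose_pow,
    phiMat_pow, phiMat_transpose, symPhiMat, add_comm]

theorem addOrderOf_one_fin : addOrderOf (1 : Fin m) = m := by
  obtain ⟨n, rfl⟩ := Nat.exists_eq_succ_of_ne_zero (NeZero.ne m)
  exact ZMod.addOrderOf_one (n + 1)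

theorem isHalfSystem_nsmul_one_fin {ι : Type*} [Fintype ι] (hm : m = 2 * Fintype.card ι + 1)
    {ψ : ι → ℕ} (hmem : ∀ a, ψ a ∈ Finset.Icc 1 (Fintype.card ι)) (hinj : Function.Injective ψ) :
    IsHalfSystem fun a ↦ ψ a • (1 : Fin m) :=
  isHalfSystem_nsmul (addOrderOf_one_fin.trans (Fintype.card_fin m).symm)
    ((Fintype.card_fin m).trans hm) hmem hinj

end Shift

section AuxiliaryMatrices

variable {F : Type*} [Field F] [Fintype F] [DecidableEq F]

theorem sum_phiMat_affine {c : F} (hc : c ≠ 0) (d : F) :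
    ∑ x, phiMat F (c * x + d) = allOnes F := by
  rw [← sum_phiMat]
  exact ((Equiv.mulLeft₀ c hc).trans (Equiv.addRight d)).sum_comp (phiMat F)

theorem Cmat_mul_Cmat_apply (γ δ α β : F) (p r : F × F) :
    (Cmat F γ α * Cmat F δ β) p r =
      (∑ x, phiMat F ((γ - δ) * x + (δ * r.1 - γ * p.1 + (α + β)))) p.2 r.2 := by
  rw [Matrix.mul_apply, Fintype.sum_prod_type, Matrix.sum_apply]
  refine Finset.sum_congr rfl fun x _ ↦ ?_
  simp only [Cmat, of_apply]
  rw [← Matrix.mul_apply, phiMat_mul_phiMat]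
  congr 1
  ring_nf

theorem Cmat_mul_Cmat_self (γ α β : F) :
    Cmat F γ α * Cmat F γ β = (Fintype.card F : ℤ) • Cmat F γ (α + β) := by
  ext p r
  rw [Cmat_mul_Cmat_apply]
  simp [Cmat, Matrix.sum_apply, mul_sub]

theorem Cmat_mul_Cmat_of_ne {γ δ : F} (h : γ ≠ δ) (α β : F) :
    Cmat F γ α * Cmat F δ β = allOnes (F × F) := by
  ext p r
  rw [Cmat_mul_Cmat_apply, sum_phiMat_affine (sub_ne_zero.mpr h)]
  rfl

theorem CyMat_mul_CyMat (α β : F) :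
    CyMat F α * CyMat F β = (Fintype.card F : ℤ) • CyMat F (α + β) := by
  rw [CyMat, CyMat, ← mul_kronecker_mul, phiMat_mul_phiMat, allOnes_mul_allOnes, kronecker_smul,
    add_comm, CyMat]

theorem Cmat_mul_CyMat (γ α β : F) : Cmat F γ α * CyMat F β = allOnes (F × F) := by
  ext p r
  rw [Matrix.mul_apply, Fintype.sum_prod_type]
  simp only [Cmat, CyMat, allOnes, kroneckerMap_apply, of_apply, mul_one, ← Finset.sum_mul,
    sum_phiMat_row, one_mul, sum_phiMat_col]

theorem CyMat_mul_Cmat (γ α β : F) : CyMat F α * Cmat F γ β = allOnes (F × F) := by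
  ext p r
  rw [Matrix.mul_apply, Fintype.sum_prod_type]
  simp only [Cmat, CyMat, allOnes, kroneckerMap_apply, of_apply, mul_one, ← Finset.mul_sum,
    sum_phiMat_col, sum_phiMat_row]

theorem Cext_mul_Cext_self (a : Option F) (α β : F) :
    Cext F a α * Cext F a β = (Fintype.card F : ℤ) • Cext F a (α + β) := by
  cases a with
  | none => exact CyMat_mul_CyMat α β
  | some γ => exact Cmat_mul_Cmat_self γ α β

theorem Cext_mul_Cext_of_ne {a b : Option F} (h : a ≠ b) (α β : F) :
    Cext F a α * Cext F b β = allOnes (F × F) := by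
  rcases a with _ | γ <;> rcases b with _ | δ
  · exact absurd rfl h
  · exact CyMat_mul_Cmat δ α β
  · exact Cmat_mul_CyMat γ α β
  · exact Cmat_mul_Cmat_of_ne (fun hγδ ↦ h (congrArg some hγδ)) α β

theorem sum_Cmat (δ : F) :
    ∑ γ, Cmat F γ δ =
      (Fintype.card F : ℤ) • ((1 : Matrix F F ℤ) ⊗ₖ phiMat F δ) +
        (allOnes F - 1) ⊗ₖ allOnes F := by
  ext ⟨p, u⟩ ⟨r, v⟩
  have entry : (∑ γ, Cmat F γ δ) (p, u) (r, v) = (∑ γ, phiMat F ((r - p) * γ + δ)) u v := by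
    simp only [Matrix.sum_apply, Cmat, of_apply, mul_comm]
  rw [entry, Matrix.add_apply, Matrix.smul_apply]
  rcases eq_or_ne p r with rfl | hpr
  · simp [Matrix.sum_apply, allOnes]
  · rw [sum_phiMat_affine (sub_ne_zero.mpr hpr.symm)]
    simp [allOnes, hpr]

theorem sum_Cext (δ : F) :
    ∑ a, Cext F a δ =
      (Fintype.card F : ℤ) • ((1 : Matrix F F ℤ) ⊗ₖ phiMat F δ) +
        (phiMat F δ - 1) ⊗ₖ allOnes F + allOnes (F × F) := by
  simp only [Fintype.sum_option, Cext, sum_Cmat, CyMat, sub_kronecker, allOnes_kronecker_allOnes]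
  abel

end AuxiliaryMatrices

theorem Nmat_product_general (F : Type*) [Field F] [Fintype F] [DecidableEq F]
    (ψ : Option F → ℕ)
    (hψ : IsHalfSystem fun a ↦ ψ a • (1 : Fin (2 * Fintype.card F + 3)))
    (α β : F) :
    Nmat F ψ α * Nmat F ψ β =
      (2 * (Fintype.card F : ℤ) ^ 2) •
        ((1 : Matrix (Fin (2 * Fintype.card F + 3)) (Fin (2 * Fintype.card F + 3)) ℤ) ⊗ₖ
          ((1 : Matrix F F ℤ) ⊗ₖ phiMat F (α + β))) +
      (2 * (Fintype.card F : ℤ)) •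
        ((1 : Matrix (Fin (2 * Fintype.card F + 3)) (Fin (2 * Fintype.card F + 3)) ℤ) ⊗ₖ
          ((phiMat F (α + β) - 1) ⊗ₖ allOnes F)) +
      (2 * (Fintype.card F : ℤ)) •
        allOnes (Fin (2 * Fintype.card F + 3) × (F × F)) +
      (Fintype.card F : ℤ) •
        ∑ a : Option F,
          (shiftV (2 * Fintype.card F + 3) ^ (2 * ψ a) +
            (shiftV (2 * Fintype.card F + 3))ᵀ ^ (2 * ψ a)) ⊗ₖ Cext F a (α + β) := by
  simp only [Nmat, shiftV_pow_add_transpose_pow]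
  rw [sum_kronecker_mul_sum_kronecker _ _ _ _ _ fun a b hab ↦ Cext_mul_Cext_of_ne hab α β,
    hψ.sum_symPhiMat_mul_self_sub_sum_mul_self, Fintype.card_option]
  have diagonal : ∑ a, (symPhiMat (Fin (2 * Fintype.card F + 3)) (ψ a • 1) *
        symPhiMat _ (ψ a • 1)) ⊗ₖ (Cext F a α * Cext F a β) =
      (Fintype.card F : ℤ) • ∑ a, symPhiMat _ ((2 * ψ a) • 1) ⊗ₖ Cext F a (α + β) +
        (2 * (Fintype.card F : ℤ)) • (1 ⊗ₖ ∑ a, Cext F a (α + β)) := by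
    simp only [symPhiMat_mul_self, Cext_mul_Cext_self, add_kronecker, kronecker_smul,
      smul_kronecker, Finset.sum_add_distrib, ← Finset.smul_sum, kronecker_sum, mul_nsmul']
    module
  rw [diagonal, sum_Cext]
  simp only [kronecker_add, kronecker_smul, smul_kronecker, sub_kronecker,
    allOnes_kronecker_allOnes]
  push_cast
  module

/-- the product formula
N_α·N_β = 2q²·(I ⊗ I ⊗ φ(α+β)) + 2q·(I ⊗ (φ(α+β)−I) ⊗ J) + 2q·J
          + q·Σ_a (V^{2ψ(a)} + V^{−2ψ(a)}) ⊗ C_{a,α+β}. -/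
theorem Nmat_product (F : Type*) [Field F] [Fintype F] [DecidableEq F]
    (hodd : Odd (Fintype.card F))
    (ψ : Option F → ℕ)
    (hmem : ∀ a, ψ a ∈ Finset.Icc 1 (Fintype.card F + 1))
    (hinj : Function.Injective ψ)
    (α β : F) :
    Nmat F ψ α * Nmat F ψ β =
      (2 * (Fintype.card F : ℤ) ^ 2) •
        ((1 : Matrix (Fin (2 * Fintype.card F + 3)) (Fin (2 * Fintype.card F + 3)) ℤ) ⊗ₖ
          ((1 : Matrix F F ℤ) ⊗ₖ phiMat F (α + β))) +
      (2 * (Fintype.card F : ℤ)) •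
        ((1 : Matrix (Fin (2 * Fintype.card F + 3)) (Fin (2 * Fintype.card F + 3)) ℤ) ⊗ₖ
          ((phiMat F (α + β) - 1) ⊗ₖ allOnes F)) +
      (2 * (Fintype.card F : ℤ)) •
        allOnes (Fin (2 * Fintype.card F + 3) × (F × F)) +
      (Fintype.card F : ℤ) •
        ∑ a : Option F,
          (shiftV (2 * Fintype.card F + 3) ^ (2 * ψ a) +
            (shiftV (2 * Fintype.card F + 3))ᵀ ^ (2 * ψ a)) ⊗ₖ Cext F a (α + β) := by
  have hψ := isHalfSystem_nsmul_one_fin (m := 2 * Fintype.card F + 3)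
    (by rw [Fintype.card_option]; ring) (by rwa [Fintype.card_option]) hinj
  exact Nmat_product_general F ψ hψ α β
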